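/- arXiv:1907.12313 — 2 statements merged into one kernel-verified Lean document; each statement's English description precedes it below -/
import Mathlib

section
/- Let n ≥ 1 and 1 ≤ k ≤ n. Then the set S = {R : R is a real symmetric (n+1)×(n+1) matrix, r ∈ Γ_k^+, and F_k(R) > 0} is a convex cone: if R, R' ∈ S and s, s' > 0, then sR + s'R' ∈ S. -/
/-!
`F_k(R)` is the coefficient of `X ^ (n - k)` in `det (X • diag(0, 1, …, 1) + R)`. Put
`e = diag(M, 1, …, 1)` with `M > 0`. For `R` real symmetric and `0 < im z`, the polynomial
`u ↦ det (u • diag(0, 1, …, 1) + z • e + R)` has no zero with `0 ≤ im u`, so by the Gauss–Lucas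
theorem its coefficients do not vanish: `F_k` is hyperbolic in the direction `e`. Expanding
`F_k (R + t • e)` in `t` shows that each `R` in `S` lies in Gårding's hyperbolicity cone of `F_k`
along `e` once `M` is large. This cone is convex, and `F_k` has constant sign on it. Convexity of
`Γ_k` is the special case of block diagonal matrices.
-/

open Matrix

/-- `σ_k(A)`: the k-th elementary symmetric function of the eigenvalues of `A`,
defined as `(−1)^k` times the coefficient of `X^(n−k)` in the characteristic polynomial. -/
noncomputable def sigmaMat {n : ℕ} (A : Matrix (Fin n) (Fin n) ℝ) (k : ℕ) : ℝ :=
  (-1 : ℝ) ^ k * A.charpoly.coeff (n - k)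

/-- The k-th Newton transform `T_k(A) = Σ_{j=0}^{k} (−1)^j σ_{k−j}(A) A^j`. -/
noncomputable def newtonT {n : ℕ} (A : Matrix (Fin n) (Fin n) ℝ) (k : ℕ) :
    Matrix (Fin n) (Fin n) ℝ :=
  ∑ j ∈ Finset.range (k + 1), ((-1 : ℝ) ^ j * sigmaMat A (k - j)) • A ^ j

/-- `A ∈ Γ_k^+` iff `σ_j(A) > 0` for all `1 ≤ j ≤ k`. -/
def GammaPlus {n : ℕ} (k : ℕ) (A : Matrix (Fin n) (Fin n) ℝ) : Prop :=
  ∀ j : ℕ, 1 ≤ j → j ≤ k → 0 < sigmaMat A j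

/-- The lower-right `n × n` block of an `(n+1) × (n+1)` matrix. -/
def lowerBlock {n : ℕ} (R : Matrix (Fin (n + 1)) (Fin (n + 1)) ℝ) :
    Matrix (Fin n) (Fin n) ℝ :=
  fun i j => R i.succ j.succ

/-- The vector `x = (r_{01}, …, r_{0n})`. -/
def xVec {n : ℕ} (R : Matrix (Fin (n + 1)) (Fin (n + 1)) ℝ) : Fin n → ℝ :=
  fun i => R 0 i.succ

/-- `F_k(R) = r₀₀ σ_k(r) − x T_{k−1}(r) xᵀ`. -/
noncomputable def Fk {n : ℕ} (k : ℕ) (R : Matrix (Fin (n + 1)) (Fin (n + 1)) ℝ) : ℝ :=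
  R 0 0 * sigmaMat (lowerBlock R) k -
    xVec R ⬝ᵥ (newtonT (lowerBlock R) (k - 1)).mulVec (xVec R)

/-- Membership in the set `S`: `R` symmetric, lower-right block in `Γ_k^+`, and `F_k(R) > 0`. -/
def inS {n : ℕ} (k : ℕ) (R : Matrix (Fin (n + 1)) (Fin (n + 1)) ℝ) : Prop :=
  R.IsSymm ∧ GammaPlus k (lowerBlock R) ∧ 0 < Fk k R

open Polynomial

section BorderedDeterminant

theorem det_eq_mul_sub_dotProduct_adjugate_mulVec {K : Type*} [CommRing K] {n : ℕ}
    (A : Matrix (Fin (n + 1)) (Fin (n + 1)) K) :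
    A.det = A 0 0 * (A.submatrix Fin.succ Fin.succ).det -
      (fun j : Fin n => A 0 j.succ) ⬝ᵥ
        (A.submatrix Fin.succ Fin.succ).adjugate *ᵥ fun i : Fin n => A i.succ 0 := by
  cases n with
  | zero => simp [Matrix.det_unique]
  | succ n =>
    have minor (j : Fin (n + 1)) : (A.submatrix Fin.succ j.succ.succAbove).det =
        ∑ i : Fin (n + 1), (-1) ^ (i : ℕ) * A i.succ 0 *
          ((A.submatrix Fin.succ Fin.succ).submatrix i.succAbove j.succAbove).det := by
      rw [det_succ_column_zero]
      refine Finset.sum_congr rfl fun i _ => ?_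
      congr 2
      ext p q
      simp [Fin.succ_succAbove_succ]
    rw [det_succ_row_zero, Fin.sum_univ_succ]
    simp only [minor, Fin.val_zero, pow_zero, one_mul, Fin.succAbove_zero, sub_eq_add_neg,
      dotProduct, mulVec, adjugate_fin_succ_eq_det_submatrix, Finset.mul_sum,
      ← Finset.sum_neg_distrib, Fin.val_succ, pow_succ, pow_add]
    congr! 3
    ring

end BorderedDeterminant

section PolynomialZeros

theorem eval_derivative_ne_zero_of_forall_notMem {K : Set ℂ} (hK : Convex ℝ K) {p : ℂ[X]}
    (hp : 0 < p.natDegree) (h : ∀ z ∉ K, p.eval z ≠ 0) {z : ℂ} (hz : z ∉ K) :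
    p.derivative.eval z ≠ 0 := by
  have hroots : p.rootSet ℂ ⊆ K := fun w hw => by
    by_contra hwK
    exact h w hwK (by simpa using (mem_rootSet.1 hw).2)
  have hp' : p.derivative ≠ 0 := fun h0 => hp.ne' (derivative_eq_zero.1 h0)
  intro h0
  exact hz (convexHull_min hroots hK (rootSet_derivative_subset_convexHull_rootSet
    (natDegree_pos_iff_degree_pos.1 hp) (mem_rootSet.2 ⟨hp', by simpa using h0⟩)))

theorem eval_iterate_derivative_ne_zero_of_forall_notMem {K : Set ℂ} (hK : Convex ℝ K) {p : ℂ[X]}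
    {m : ℕ} (hm : m ≤ p.natDegree) (h : ∀ z ∉ K, p.eval z ≠ 0) {z : ℂ} (hz : z ∉ K) :
    (derivative^[m] p).eval z ≠ 0 := by
  induction m generalizing p with
  | zero => exact h z hz
  | succ m ih =>
    refine ih (by rw [natDegree_derivative]; lia) fun w hw => ?_
    exact eval_derivative_ne_zero_of_forall_notMem hK (by lia) h hw

theorem coeff_ne_zero_of_forall_notMem {K : Set ℂ} (hK : Convex ℝ K) (h0 : 0 ∉ K) {p : ℂ[X]}
    {m : ℕ} (hm : m ≤ p.natDegree) (h : ∀ z ∉ K, p.eval z ≠ 0) : p.coeff m ≠ 0 := by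
  have := eval_iterate_derivative_ne_zero_of_forall_notMem hK hm h h0
  rw [← coeff_zero_eq_eval_zero, coeff_iterate_derivative] at this
  contrapose! this
  simp [this]

theorem norm_eval_one_mul_le_norm_eval {p : ℂ[X]} {d : ℕ} (hd : p.natDegree ≤ d)
    (h : ∀ z : ℂ, ‖z‖ ≤ 1 → p.eval z ≠ 0) {w : ℂ} (hw : ‖w‖ ≤ 1) :
    ‖p.eval 1‖ * ((1 - ‖w‖) / 2) ^ d ≤ ‖p.eval w‖ := by
  have root_le {r : ℂ} (hr : r ∈ p.roots) : ‖1 - r‖ * ((1 - ‖w‖) / 2) ≤ ‖w - r‖ := by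
    have one_lt : 1 < ‖r‖ := by
      by_contra! hle
      exact h r hle (isRoot_of_mem_roots hr)
    have upper : ‖1 - r‖ ≤ 1 + ‖r‖ := by simpa using norm_sub_le (1 : ℂ) r
    have lower : ‖r‖ - ‖w‖ ≤ ‖w - r‖ := by simpa [norm_sub_rev] using norm_sub_norm_le r w
    nlinarith [norm_nonneg w]
  have norm_eval (z : ℂ) : ‖p.eval z‖ = ‖p.leadingCoeff‖ * (p.roots.map fun r => ‖z - r‖).prod := by
    rw [(IsAlgClosed.splits p).eval_eq_prod_roots, norm_mul]
    congr 1
    exact (map_multiset_prod (normHom : ℂ →*₀ ℝ) _).trans (by rw [Multiset.map_map]; rfl)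
  calc ‖p.eval 1‖ * ((1 - ‖w‖) / 2) ^ d
      ≤ ‖p.eval 1‖ * ((1 - ‖w‖) / 2) ^ p.natDegree := by
        gcongr ?_ * ?_
        exact pow_le_pow_of_le_one (by linarith) (by linarith [norm_nonneg w]) hd
    _ = ‖p.leadingCoeff‖ * (p.roots.map fun r => ‖1 - r‖ * ((1 - ‖w‖) / 2)).prod := by
        rw [Multiset.prod_map_mul, norm_eval, (IsAlgClosed.splits p).natDegree_eq_card_roots,
          Multiset.map_const', Multiset.prod_replicate, mul_assoc]
    _ ≤ ‖p.leadingCoeff‖ * (p.roots.map fun r => ‖w - r‖).prod := by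
        gcongr
        refine Multiset.prod_map_le_prod_map₀ _ _ (fun r _ => ?_) fun r hr => root_le hr
        have : 0 ≤ 1 - ‖w‖ := by linarith
        positivity
    _ = ‖p.eval w‖ := (norm_eval w).symm

theorem eval_ne_zero_of_forall_norm_eq_one {T : Type*} [TopologicalSpace T] [PreconnectedSpace T]
    {p : T → ℂ[X]} {d : ℕ} (hd : ∀ t, (p t).natDegree ≤ d)
    (hp : Continuous fun q : T × ℂ => (p q.1).eval q.2)
    (hcircle : ∀ t, ∀ z : ℂ, ‖z‖ = 1 → (p t).eval z ≠ 0) {t₀ : T}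
    (ht₀ : ∀ z : ℂ, ‖z‖ ≤ 1 → (p t₀).eval z ≠ 0) (t : T) {z : ℂ} (hz : ‖z‖ ≤ 1) :
    (p t).eval z ≠ 0 := by
  -- The bound of `eval z` by `eval 1` in `norm_eval_one_mul_le_norm_eval` is uniform in the
  -- polynomial, so it survives limits; as `eval 1` never vanishes, `A` is closed.
  set A : Set T := {t | ∀ z : ℂ, ‖z‖ ≤ 1 → (p t).eval z ≠ 0}
  have eq_iInter : A = ⋂ z : Metric.closedBall (0 : ℂ) 1,
      {t | ‖(p t).eval 1‖ * ((1 - ‖(z : ℂ)‖) / 2) ^ d ≤ ‖(p t).eval (z : ℂ)‖} := by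
    ext t
    simp only [Set.mem_iInter, Subtype.forall, mem_closedBall_zero_iff]
    refine ⟨fun h z => norm_eval_one_mul_le_norm_eval (hd t) h, fun h z hz => ?_⟩
    obtain hz1 | hz1 := hz.eq_or_lt
    · exact hcircle t z hz1
    · have h1 : 0 < ‖(p t).eval 1‖ := norm_pos_iff.2 (hcircle t 1 norm_one)
      have : 0 < (1 - ‖z‖) / 2 := by linarith
      exact norm_pos_iff.1 ((by positivity : (0 : ℝ) < _).trans_le (h z hz))
  have hcont (z : ℂ) : Continuous fun t => (p t).eval z := hp.comp (.prodMk_left z)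
  have isClosed : IsClosed A := by
    rw [eq_iInter]
    exact isClosed_iInter fun z =>
      isClosed_le ((hcont 1).norm.mul continuous_const) (hcont z).norm
  have isOpen : IsOpen A := isOpen_iff_mem_nhds.2 fun t ht => by
    have := (isCompact_closedBall (0 : ℂ) 1).eventually_forall_of_forall_eventually
      (x₀ := t) (P := fun t z => (p t).eval z ≠ 0)
      fun z hz => hp.continuousAt.eventually_ne (ht z (mem_closedBall_zero_iff.1 hz))
    filter_upwards [this] with s hs z hz using hs z (mem_closedBall_zero_iff.2 hz)
  exact Set.eq_univ_iff_forall.1 (IsClopen.eq_univ ⟨isClosed, isOpen⟩ ⟨t₀, ht₀⟩) t z hz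

end PolynomialZeros

section HalfPlane

open Complex

theorem im_cayley (c : ℂ) :
    (I * (1 + c) / (1 - c)).im = (1 - ‖c‖ ^ 2) / normSq (1 - c) := by
  rw [← normSq_eq_norm_sq]
  simp [div_im, normSq_apply]
  ring

theorem exists_norm_le_one_and_cayley_eq {z : ℂ} (hz : 0 ≤ z.im) :
    ∃ c : ℂ, ‖c‖ ≤ 1 ∧ c ≠ 1 ∧ I * (1 + c) / (1 - c) = z := by
  have hI := I_ne_zero
  have hne : z + I ≠ 0 := fun h => by
    have := congrArg im h
    simp only [add_im, I_im, zero_im] at this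
    linarith
  have hsub : 1 - (z - I) / (z + I) = 2 * I / (z + I) := by field_simp; ring
  refine ⟨(z - I) / (z + I), ?_, ?_, ?_⟩
  · rw [norm_div]
    refine div_le_one_of_le₀ ?_ (norm_nonneg _)
    rw [← sq_le_sq₀ (norm_nonneg _) (norm_nonneg _), Complex.sq_norm, Complex.sq_norm]
    simp only [normSq_apply, sub_re, add_re, I_re, sub_im, add_im, I_im]
    nlinarith
  · rw [ne_comm, ← sub_ne_zero, hsub]
    exact div_ne_zero (by simp) hne
  · rw [hsub]
    field_simp
    ring

variable {ι : Type*} {f : MvPolynomial ι ℂ} {d : ℕ} {v w : ι → ℂ}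

theorem eval_smul_of_isHomogeneous {R : Type*} [CommSemiring R] {f : MvPolynomial ι R}
    (hf : f.IsHomogeneous d) (c : R) (v : ι → R) :
    MvPolynomial.eval (c • v) f = c ^ d * MvPolynomial.eval v f := by
  simp only [MvPolynomial.eval_eq, Finset.mul_sum]
  refine Finset.sum_congr rfl fun m hm => ?_
  have hm : ∑ i ∈ m.support, m i = d := by
    simpa [Finsupp.weight_apply, Finsupp.sum] using hf (MvPolynomial.mem_support_iff.1 hm)
  simp only [Pi.smul_apply, smul_eq_mul, mul_pow, Finset.prod_mul_distrib,
    Finset.prod_pow_eq_pow_sum, hm]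
  ring

/-- The polynomial on the unit disc corresponding to the function `z ↦ f (v + z • w)` on the upper
half plane under the Cayley transform `z = I * (1 + c) / (1 - c)`, with denominators cleared. -/
noncomputable def cayleyPullback (f : MvPolynomial ι ℂ) (v w : ι → ℂ) : ℂ[X] :=
  MvPolynomial.aeval (fun i => C (v i) * (1 - X) + C (I * w i) * (1 + X)) f

theorem eval_cayleyPullback (c : ℂ) :
    (cayleyPullback f v w).eval c = MvPolynomial.eval ((1 - c) • v + (I * (1 + c)) • w) f := by
  have := MvPolynomial.comp_aeval_apply
    (fun i => C (v i) * (1 - X) + C (I * w i) * (1 + X)) (Polynomial.aeval c) f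
  rw [Polynomial.coe_aeval_eq_eval, ← cayleyPullback] at this
  rw [this, ← MvPolynomial.aeval_eq_eval]
  congr! 2
  ext i
  simp
  ring

theorem natDegree_cayleyPullback_le : (cayleyPullback f v w).natDegree ≤ f.totalDegree := by
  refine (MvPolynomial.aeval_natDegree_le f le_rfl _ (n := 1) fun i => ?_).trans_eq (mul_one _)
  compute_degree

theorem eval_one_cayleyPullback_ne_zero (hf : f.IsHomogeneous d) (hw : MvPolynomial.eval w f ≠ 0) :
    (cayleyPullback f v w).eval 1 ≠ 0 := by
  rw [eval_cayleyPullback, sub_self, zero_smul, zero_add, eval_smul_of_isHomogeneous hf]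
  exact mul_ne_zero (pow_ne_zero _ (by norm_num)) hw

theorem eval_cayleyPullback_ne_zero_iff (hf : f.IsHomogeneous d) {c : ℂ} (hc : c ≠ 1) :
    (cayleyPullback f v w).eval c ≠ 0 ↔
      MvPolynomial.eval (v + (I * (1 + c) / (1 - c)) • w) f ≠ 0 := by
  have hc : 1 - c ≠ 0 := sub_ne_zero.2 hc.symm
  rw [eval_cayleyPullback, ← mul_div_cancel₀ (I * (1 + c)) hc, ← smul_smul, ← smul_add,
    eval_smul_of_isHomogeneous hf]
  simp [hc]

theorem forall_eval_cayleyPullback_ne_zero_iff (hf : f.IsHomogeneous d)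
    (hw : MvPolynomial.eval w f ≠ 0) :
    (∀ c : ℂ, ‖c‖ ≤ 1 → (cayleyPullback f v w).eval c ≠ 0) ↔
      ∀ z : ℂ, 0 ≤ z.im → MvPolynomial.eval (v + z • w) f ≠ 0 := by
  refine ⟨fun h z hz => ?_, fun h c hc => ?_⟩
  · obtain ⟨c, hc, hc1, rfl⟩ := exists_norm_le_one_and_cayley_eq hz
    exact (eval_cayleyPullback_ne_zero_iff hf hc1).1 (h c hc)
  · obtain rfl | hc1 := eq_or_ne c 1
    · exact eval_one_cayleyPullback_ne_zero hf hw
    · refine (eval_cayleyPullback_ne_zero_iff hf hc1).2 (h _ ?_)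
      rw [im_cayley]
      exact div_nonneg (by nlinarith [norm_nonneg c]) (normSq_nonneg _)

theorem eval_add_smul_ne_zero_of_preconnectedSpace {T : Type*} [TopologicalSpace T]
    [PreconnectedSpace T] (hf : f.IsHomogeneous d) {γ : T → ι → ℂ} (hγ : Continuous γ)
    (hw : MvPolynomial.eval w f ≠ 0)
    (hreal : ∀ t, ∀ x : ℝ, MvPolynomial.eval (γ t + (x : ℂ) • w) f ≠ 0) {t₀ : T}
    (ht₀ : ∀ z : ℂ, 0 ≤ z.im → MvPolynomial.eval (γ t₀ + z • w) f ≠ 0) (t : T) {z : ℂ}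
    (hz : 0 ≤ z.im) : MvPolynomial.eval (γ t + z • w) f ≠ 0 := by
  refine (forall_eval_cayleyPullback_ne_zero_iff hf hw).1 (fun c hc => ?_) z hz
  refine eval_ne_zero_of_forall_norm_eq_one (p := fun t => cayleyPullback f (γ t) w)
    (fun _ => natDegree_cayleyPullback_le) ?_ (fun t c hc => ?_)
    ((forall_eval_cayleyPullback_ne_zero_iff hf hw).2 ht₀) t hc
  · simp only [eval_cayleyPullback]
    exact (MvPolynomial.continuous_eval f).comp (by fun_prop)
  · obtain rfl | hc1 := eq_or_ne c 1
    · exact eval_one_cayleyPullback_ne_zero hf hw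
    · rw [eval_cayleyPullback_ne_zero_iff hf hc1]
      have im_eq_zero : (I * (1 + c) / (1 - c)).im = 0 := by simp [im_cayley, hc]
      convert hreal t (I * (1 + c) / (1 - c)).re
      exact Complex.ext rfl im_eq_zero

end HalfPlane

section Hyperbolic

open Complex

variable {ι : Type*} {f : MvPolynomial ι ℂ} {d : ℕ} {e v w : ι → ℝ}

/-- `f` is hyperbolic in the real direction `e`: it has no zero of the form `x + z • e` with `x`
real and `z` in the open upper half plane. For homogeneous `f` this is Gårding's condition that
`t ↦ f (x + t • e)` have only real roots. -/
def IsHyperbolicAlong (f : MvPolynomial ι ℂ) (e : ι → ℝ) : Prop :=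
  ∀ x : ι → ℝ, ∀ z : ℂ, 0 < z.im → MvPolynomial.eval (ofReal ∘ x + z • (ofReal ∘ e)) f ≠ 0

/-- Gårding's hyperbolicity cone of `f` in the direction `e`: the vectors `v` for which all roots of
`t ↦ f (v + t • e)` are negative. -/
def hyperbolicityCone (f : MvPolynomial ι ℂ) (e : ι → ℝ) : Set (ι → ℝ) :=
  {v | ∀ t : ℝ, 0 ≤ t → MvPolynomial.eval (ofReal ∘ (v + t • e)) f ≠ 0}

theorem ofReal_comp_smul (t : ℝ) (v : ι → ℝ) : ofReal ∘ (t • v) = (t : ℂ) • (ofReal ∘ v) := by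
  ext; simp

theorem eval_ofReal_comp_map_ofRealHom (g : MvPolynomial ι ℝ) (v : ι → ℝ) :
    MvPolynomial.eval (ofReal ∘ v) (g.map ofRealHom) = (MvPolynomial.eval v g : ℂ) :=
  (MvPolynomial.eval_map _ _ g).trans (MvPolynomial.eval₂_comp ofRealHom v g).symm

theorem continuous_ofReal_comp : Continuous fun v : ι → ℝ => ofReal ∘ v := by
  unfold Function.comp
  fun_prop

theorem IsHyperbolicAlong.eval_ne_zero_of_im_ne_zero (h : IsHyperbolicAlong f e)
    (hf : f.IsHomogeneous d) (x : ι → ℝ) {z : ℂ} (hz : z.im ≠ 0) :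
    MvPolynomial.eval (ofReal ∘ x + z • (ofReal ∘ e)) f ≠ 0 := by
  obtain hz | hz := hz.lt_or_gt
  · have := h (-x) (-z) (by simpa)
    rw [show ofReal ∘ (-x) + -z • (ofReal ∘ e) = (-1 : ℂ) • (ofReal ∘ x + z • (ofReal ∘ e)) by
      ext; simp; ring, eval_smul_of_isHomogeneous hf] at this
    exact right_ne_zero_of_mul this
  · exact h x z hz

namespace hyperbolicityCone

theorem eval_ne_zero (hv : v ∈ hyperbolicityCone f e) : MvPolynomial.eval (ofReal ∘ v) f ≠ 0 := by
  simpa using hv 0 le_rfl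

theorem add_smul_mem (hv : v ∈ hyperbolicityCone f e) {t : ℝ} (ht : 0 ≤ t) :
    v + t • e ∈ hyperbolicityCone f e := fun s hs => by
  rw [add_assoc, ← add_smul]
  exact hv _ (add_nonneg ht hs)

theorem smul_mem (hf : f.IsHomogeneous d) (hv : v ∈ hyperbolicityCone f e) {c : ℝ} (hc : 0 < c) :
    c • v ∈ hyperbolicityCone f e := fun t ht => by
  have : c • v + t • e = c • (v + (t / c) • e) := by
    rw [smul_add, smul_smul, mul_div_cancel₀ _ hc.ne']
  rw [this, ofReal_comp_smul, eval_smul_of_isHomogeneous hf]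
  exact mul_ne_zero (pow_ne_zero _ (ofReal_ne_zero.2 hc.ne')) (hv _ (by positivity))

theorem exists_sub_smul_mem (hv : v ∈ hyperbolicityCone f e) :
    ∃ ε > (0 : ℝ), v - ε • e ∈ hyperbolicityCone f e := by
  have hopen : IsOpen {t : ℝ | MvPolynomial.eval (ofReal ∘ (v + t • e)) f ≠ 0} :=
    isOpen_ne_fun ((MvPolynomial.continuous_eval f).comp
      (continuous_ofReal_comp.comp (by fun_prop))) continuous_const
  obtain ⟨ε, hε, hball⟩ := Metric.isOpen_iff.1 hopen 0 (hv 0 le_rfl)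
  refine ⟨ε / 2, by positivity, fun t ht => ?_⟩
  rw [show v - (ε / 2) • e + t • e = v + (t - ε / 2) • e by module]
  obtain h | h := le_total 0 (t - ε / 2)
  · exact hv _ h
  · refine hball ?_
    rw [Metric.mem_ball, Real.dist_eq, sub_zero, abs_of_nonpos h]
    linarith

theorem eval_add_smul_ne_zero (h : IsHyperbolicAlong f e) (hf : f.IsHomogeneous d)
    (hv : v ∈ hyperbolicityCone f e) {l : ℂ} (hl : l.im ≠ 0 ∨ 0 ≤ l.re) :
    MvPolynomial.eval (ofReal ∘ v + l • (ofReal ∘ e)) f ≠ 0 := by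
  by_cases him : l.im = 0
  · have := hv l.re (hl.resolve_left (not_not.2 him))
    rwa [ofReal_comp_add, ofReal_comp_smul, show (l.re : ℂ) = l from Complex.ext rfl him.symm]
      at this
  · exact h.eval_ne_zero_of_im_ne_zero hf v him

theorem eval_I_smul_self_add_smul_ne_zero (h : IsHyperbolicAlong f e) (hf : f.IsHomogeneous d)
    (hv : v ∈ hyperbolicityCone f e) {δ : ℝ} (hδ : 0 < δ) {z : ℂ} (hz : 0 ≤ z.im) :
    MvPolynomial.eval ((I * δ) • (ofReal ∘ e) + z • (ofReal ∘ v)) f ≠ 0 := by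
  obtain rfl | hz0 := eq_or_ne z 0
  · have := h 0 (I * δ) (by simpa)
    simpa [add_comm] using this
  rw [show (I * δ) • (ofReal ∘ e) + z • (ofReal ∘ v) =
      z • (ofReal ∘ v + (I * δ / z) • (ofReal ∘ e)) by
    rw [smul_add, smul_smul, mul_div_cancel₀ _ hz0, add_comm], eval_smul_of_isHomogeneous hf]
  refine mul_ne_zero (pow_ne_zero _ hz0) (eval_add_smul_ne_zero h hf hv (.inr ?_))
  have : (I * δ / z).re = δ * z.im / normSq z := by simp [div_re]
  rw [this]
  exact div_nonneg (mul_nonneg hδ.le hz) (normSq_nonneg z)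

theorem eval_I_smul_self_add_add_smul_ne_zero (h : IsHyperbolicAlong f e) (hf : f.IsHomogeneous d)
    (hv : v ∈ hyperbolicityCone f e) {δ : ℝ} (hδ : 0 < δ) (x : ι → ℝ) {z : ℂ} (hz : 0 ≤ z.im) :
    MvPolynomial.eval ((I * δ) • (ofReal ∘ e) + ofReal ∘ x + z • (ofReal ∘ v)) f ≠ 0 := by
  refine eval_add_smul_ne_zero_of_preconnectedSpace hf (t₀ := 0)
    (γ := fun x : ι → ℝ => (I * δ) • (ofReal ∘ e) + ofReal ∘ x)
    (continuous_const.add continuous_ofReal_comp) (eval_ne_zero hv) (fun x t => ?_)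
    (fun z hz => ?_) x hz
  · have := h (x + t • v) (I * δ) (by simpa)
    rwa [ofReal_comp_add, ofReal_comp_smul, add_comm, ← add_assoc] at this
  · simpa using eval_I_smul_self_add_smul_ne_zero h hf hv hδ hz

theorem isHyperbolicAlong (h : IsHyperbolicAlong f e) (hf : f.IsHomogeneous d)
    (hv : v ∈ hyperbolicityCone f e) : IsHyperbolicAlong f v := fun x z hz => by
  -- Write `v = (v - ε • e) + ε • e`: then `z • v` supplies the multiple `I * (im z * ε)` of `e`.
  obtain ⟨ε, hε, hvε⟩ := exists_sub_smul_mem hv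
  have hδ : 0 < z.im * ε := by positivity
  convert eval_I_smul_self_add_add_smul_ne_zero h hf hvε hδ (x + (z.re * ε) • e) hz.le using 3
  ext i
  simp only [Pi.add_apply, Pi.smul_apply, Pi.sub_apply, Function.comp_apply, smul_eq_mul,
    ofReal_add, ofReal_sub, ofReal_mul]
  linear_combination (-ε * e i : ℂ) * re_add_im z

theorem self_mem (h : IsHyperbolicAlong f e) (hf : f.IsHomogeneous d) :
    e ∈ hyperbolicityCone f e := fun t ht => by
  have hI := h 0 I (by simp)
  rw [show ofReal ∘ (0 : ι → ℝ) = 0 by ext; simp, zero_add, eval_smul_of_isHomogeneous hf] at hI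
  rw [show e + t • e = (1 + t) • e by module, ofReal_comp_smul, eval_smul_of_isHomogeneous hf]
  exact mul_ne_zero (pow_ne_zero _ (ofReal_ne_zero.2 (by positivity))) (right_ne_zero_of_mul hI)

theorem starConvex (h : IsHyperbolicAlong f e) (hf : f.IsHomogeneous d) :
    StarConvex ℝ e (hyperbolicityCone f e) := fun v hv a b ha hb hab => by
  obtain rfl | hb := hb.eq_or_lt
  · rw [add_zero] at hab
    simpa [hab] using self_mem h hf
  · rw [add_comm]
    exact add_smul_mem (smul_mem hf hv hb) ha

theorem isPreconnected (h : IsHyperbolicAlong f e) (hf : f.IsHomogeneous d) :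
    IsPreconnected (hyperbolicityCone f e) :=
  ((starConvex h hf).isPathConnected (self_mem h hf)).isConnected.isPreconnected

theorem eval_I_smul_add_smul_ne_zero_of_mem (h : IsHyperbolicAlong f e) (hf : f.IsHomogeneous d)
    (hv : v ∈ hyperbolicityCone f e) (hw : w ∈ hyperbolicityCone f e) {z : ℂ} (hz : 0 ≤ z.im) :
    MvPolynomial.eval (I • (ofReal ∘ v) + z • (ofReal ∘ w)) f ≠ 0 := by
  have := isPreconnected_iff_preconnectedSpace.1 (isPreconnected h hf)
  refine eval_add_smul_ne_zero_of_preconnectedSpace hf (t₀ := ⟨e, self_mem h hf⟩) (t := ⟨v, hv⟩)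
    (γ := fun y : hyperbolicityCone f e => I • (ofReal ∘ y.1))
    ((continuous_ofReal_comp.comp continuous_subtype_val).const_smul I) (eval_ne_zero hw)
    (fun y t => ?_) (fun z hz => ?_) hz
  · have := isHyperbolicAlong h hf y.2 (t • w) I (by simp)
    rwa [ofReal_comp_smul, add_comm] at this
  · simpa using eval_I_smul_self_add_smul_ne_zero h hf hw one_pos hz

theorem add_mem (h : IsHyperbolicAlong f e) (hf : f.IsHomogeneous d)
    (hv : v ∈ hyperbolicityCone f e) (hw : w ∈ hyperbolicityCone f e) :
    v + w ∈ hyperbolicityCone f e := fun t ht => by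
  have := eval_I_smul_add_smul_ne_zero_of_mem h hf (add_smul_mem hv ht) hw (z := I) (by simp)
  rw [← smul_add, ← ofReal_comp_add, add_right_comm, eval_smul_of_isHomogeneous hf] at this
  exact right_ne_zero_of_mul this

theorem eval_pos_of_eval_pos {g : MvPolynomial ι ℝ}
    (h : IsHyperbolicAlong (g.map ofRealHom) e) (hg : g.IsHomogeneous d)
    (hv : v ∈ hyperbolicityCone (g.map ofRealHom) e)
    (hw : w ∈ hyperbolicityCone (g.map ofRealHom) e) (hpos : 0 < MvPolynomial.eval v g) :
    0 < MvPolynomial.eval w g := by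
  by_contra! hneg
  obtain ⟨u, hu, hu0⟩ := (isPreconnected h (hg.map ofRealHom)).intermediate_value hw hv
    (MvPolynomial.continuous_eval g).continuousOn ⟨hneg, hpos.le⟩
  have := eval_ne_zero hu
  rw [eval_ofReal_comp_map_ofRealHom] at this
  exact this (congrArg ofReal hu0)

end hyperbolicityCone

end Hyperbolic

section DetPencil

variable {ι K L : Type*} [Fintype ι] [DecidableEq ι] [CommRing K] [CommRing L]

/-- The determinant of the matrix pencil `X • A + B`, as a polynomial in `X`. -/
noncomputable def detPencil (A B : Matrix ι ι K) : K[X] :=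
  ((X : K[X]) • A.map C + B.map C).det

theorem map_detPencil (φ : K →+* L) (A B : Matrix ι ι K) :
    (detPencil A B).map φ = detPencil (A.map φ) (B.map φ) := by
  rw [detPencil, detPencil, ← coe_mapRingHom, RingHom.map_det]
  congr 1
  ext1 i j
  simp

theorem eval_detPencil (A B : Matrix ι ι K) (u : K) :
    (detPencil A B).eval u = (u • A + B).det := by
  rw [detPencil, ← coe_evalRingHom, RingHom.map_det]
  congr 1
  ext i j
  simp [mul_comm u]

theorem taylor_detPencil (A B : Matrix ι ι K) (t : K) :
    taylor t (detPencil A B) = detPencil A (B + t • A) := by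
  rw [detPencil, detPencil, ← taylorAlgHom_apply, AlgHom.map_det]
  congr 1
  ext1 i j
  simp only [AlgHom.mapMatrix_apply, map_apply, Matrix.add_apply, Matrix.smul_apply, smul_eq_mul,
    map_add, map_mul, taylorAlgHom_apply, taylor_X, taylor_C]
  ring

theorem isHomogeneous_coeff_detPencil {σ : Type*} [Finite σ] (A : Matrix ι ι K)
    {B : Matrix ι ι (MvPolynomial σ K)} (hB : ∀ i j, (B i j).IsHomogeneous 1) {i j : ℕ}
    (hij : i + j = Fintype.card ι) :
    ((detPencil (A.map MvPolynomial.C) B).coeff i).IsHomogeneous j := by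
  refine MvPolynomial.IsHomogeneous.coeff_isHomogeneous_of_optionEquivLeft_symm ?_ _ _ hij
  have hentry (a b : ι) : (MvPolynomial.X none * MvPolynomial.C (A a b) +
      MvPolynomial.rename some (B a b)).IsHomogeneous 1 :=
    ((MvPolynomial.isHomogeneous_X K none).mul (MvPolynomial.isHomogeneous_C _ _)).add
      (hB a b).rename_isHomogeneous
  rw [detPencil, ← AlgEquiv.coe_toAlgHom, AlgHom.map_det, det_apply']
  refine MvPolynomial.IsHomogeneous.sum _ _ _ fun τ _ => ?_
  rw [← zero_add (Fintype.card ι), ← Finset.card_univ, Finset.card_eq_sum_ones]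
  refine .mul ?_ (.prod _ _ _ fun a _ => ?_)
  · exact_mod_cast MvPolynomial.isHomogeneous_C _ ((Equiv.Perm.sign τ : ℤ) : K)
  · convert hentry (τ a) a using 1
    simp [MvPolynomial.optionEquivLeft_symm_apply, mul_comm (MvPolynomial.X none)]

end DetPencil

section AdjugateCharmatrix

variable {ι K : Type*} [Fintype ι] [DecidableEq ι] [CommRing K]

theorem X_sub_C_mul_matPolyEquiv_adjugate_charmatrix (B : Matrix ι ι K) :
    (X - C B) * matPolyEquiv B.charmatrix.adjugate =
      B.charpoly.map (algebraMap K (Matrix ι ι K)) := by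
  rw [← matPolyEquiv_charmatrix, ← map_mul, mul_adjugate, ← charpoly, matPolyEquiv_smul_one]

theorem coeff_matPolyEquiv_adjugate_charmatrix (B : Matrix ι ι K) (m : ℕ) :
    (matPolyEquiv B.charmatrix.adjugate).coeff m =
      B.charpoly.coeff (m + 1) • (1 : Matrix ι ι K) +
        B * (matPolyEquiv B.charmatrix.adjugate).coeff (m + 1) := by
  have := congrArg (coeff · (m + 1)) (X_sub_C_mul_matPolyEquiv_adjugate_charmatrix B)
  simp only [sub_mul, coeff_sub, coeff_X_mul, coeff_C_mul, coeff_map,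
    Algebra.algebraMap_eq_smul_one] at this
  rw [← this, sub_add_cancel]

theorem coeff_matPolyEquiv_adjugate_charmatrix_eq_zero (B : Matrix ι ι K) {m : ℕ}
    (hm : Fintype.card ι ≤ m) : (matPolyEquiv B.charmatrix.adjugate).coeff m = 0 := by
  nontriviality K
  nontriviality Matrix ι ι K
  by_cases h0 : matPolyEquiv B.charmatrix.adjugate = 0
  · simp [h0]
  refine coeff_eq_zero_of_natDegree_lt ?_
  have := (monic_X_sub_C B).natDegree_mul' h0
  rw [X_sub_C_mul_matPolyEquiv_adjugate_charmatrix, natDegree_X_sub_C] at this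
  have := natDegree_map_le (p := B.charpoly) (f := algebraMap K (Matrix ι ι K))
  rw [charpoly_natDegree_eq_dim] at this
  lia

end AdjugateCharmatrix

theorem coeff_charpoly_neg {ι K : Type*} [Fintype ι] [DecidableEq ι] [CommRing K]
    (A : Matrix ι ι K) (m : ℕ) :
    (-A).charpoly.coeff m = (-1) ^ (Fintype.card ι + m) * A.charpoly.coeff m := by
  have hmatrix : (compRingHom (-X)).mapMatrix A.charmatrix = -(-A).charmatrix := by
    ext1 i j
    by_cases hij : i = j
    · subst hij
      simp [sub_eq_add_neg, add_comm]
    · simp [hij]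
  have hcomp : A.charpoly.comp (-X) = C ((-1) ^ Fintype.card ι) * (-A).charpoly := by
    rw [charpoly, charpoly, ← coe_compRingHom_apply, RingHom.map_det, hmatrix, det_neg, C_pow,
      C_neg, C_1]
  have hcoeff : A.charpoly.coeff m * (-1) ^ m = (-1) ^ Fintype.card ι * (-A).charpoly.coeff m := by
    rw [← coeff_C_mul, ← hcomp, ← comp_C_mul_X_coeff, C_neg, C_1, neg_one_mul]
  rw [pow_add, mul_assoc, mul_comm _ (A.charpoly.coeff m), hcoeff, ← mul_assoc, ← mul_pow,
    neg_one_mul, neg_neg, one_pow, one_mul]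

theorem sigmaMat_eq_coeff_charpoly_neg {n k : ℕ} (A : Matrix (Fin n) (Fin n) ℝ) (hk : k ≤ n) :
    sigmaMat A k = (-A).charpoly.coeff (n - k) := by
  obtain ⟨j, rfl⟩ := Nat.exists_eq_add_of_le hk
  rw [sigmaMat, coeff_charpoly_neg, Fintype.card_fin, Nat.add_sub_cancel_left, add_assoc, pow_add,
    ← two_mul j, pow_mul]
  simp

theorem sigmaMat_zero {n : ℕ} (A : Matrix (Fin n) (Fin n) ℝ) : sigmaMat A 0 = 1 := by
  have := (charpoly_monic A).coeff_natDegree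
  rw [charpoly_natDegree_eq_dim, Fintype.card_fin] at this
  simp [sigmaMat, this]

theorem newtonT_zero {n : ℕ} (A : Matrix (Fin n) (Fin n) ℝ) : newtonT A 0 = 1 := by
  simp [newtonT, sigmaMat_zero]

theorem newtonT_succ {n : ℕ} (A : Matrix (Fin n) (Fin n) ℝ) (k : ℕ) :
    newtonT A (k + 1) = sigmaMat A (k + 1) • (1 : Matrix (Fin n) (Fin n) ℝ) - A * newtonT A k := by
  rw [newtonT, newtonT, Finset.sum_range_succ', Finset.mul_sum, add_comm, sub_eq_add_neg,
    ← Finset.sum_neg_distrib]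
  congr 1
  · simp
  · refine Finset.sum_congr rfl fun j _ => ?_
    rw [Nat.add_sub_add_right, mul_smul_comm, ← pow_succ', ← neg_smul]
    congr 1
    ring

theorem newtonT_eq_coeff_matPolyEquiv_adjugate {n k : ℕ} (A : Matrix (Fin n) (Fin n) ℝ)
    (hk : k < n) :
    newtonT A k = (matPolyEquiv (charmatrix (-A)).adjugate).coeff (n - 1 - k) := by
  induction k with
  | zero =>
    rw [coeff_matPolyEquiv_adjugate_charmatrix, coeff_matPolyEquiv_adjugate_charmatrix_eq_zero _
      (by rw [Fintype.card_fin]; lia), show n - 1 - 0 + 1 = n - 0 by lia,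
      ← sigmaMat_eq_coeff_charpoly_neg A (Nat.zero_le n), sigmaMat_zero, newtonT_zero]
    simp
  | succ k ih =>
    rw [coeff_matPolyEquiv_adjugate_charmatrix, show n - 1 - (k + 1) + 1 = n - (k + 1) by lia,
      ← sigmaMat_eq_coeff_charpoly_neg A hk.le, show n - (k + 1) = n - 1 - k by lia,
      ← ih (by lia), newtonT_succ, neg_mul, sub_eq_add_neg]

section CornerDiagonal

variable {K L : Type*} [CommRing K] [CommRing L] {n : ℕ}

/-- The diagonal matrix `diag (a, 1, …, 1)`. For `a = 0` it is the direction in which the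
determinant is differentiated to produce `Fk`; for `a > 0` it is a direction of hyperbolicity. -/
def cornerDiagonal (a : K) : Matrix (Fin (n + 1)) (Fin (n + 1)) K :=
  diagonal (Fin.cons a 1)

theorem map_cornerDiagonal (φ : K →+* L) (a : K) :
    (cornerDiagonal a : Matrix (Fin (n + 1)) (Fin (n + 1)) K).map φ = cornerDiagonal (φ a) := by
  rw [cornerDiagonal, diagonal_map (map_zero φ), cornerDiagonal]
  congr 1
  ext i
  refine Fin.cases ?_ (fun i => ?_) i <;> simp

theorem cornerDiagonal_eq_single_add (a : K) :
    (cornerDiagonal a : Matrix (Fin (n + 1)) (Fin (n + 1)) K) =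
      single 0 0 a + cornerDiagonal 0 := by
  rw [cornerDiagonal, cornerDiagonal, ← diagonal_single, diagonal_add]
  congr 1
  ext i
  refine Fin.cases ?_ (fun i => ?_) i <;> simp

variable (Z : Matrix (Fin (n + 1)) (Fin (n + 1)) K)

theorem coeff_detPencil_cornerDiagonal_zero (m : ℕ) :
    (detPencil (cornerDiagonal 0) Z).coeff m =
      Z 0 0 * (-Z.submatrix Fin.succ Fin.succ).charpoly.coeff m -
        (fun j : Fin n => Z 0 j.succ) ⬝ᵥ
          (matPolyEquiv (charmatrix (-Z.submatrix Fin.succ Fin.succ)).adjugate).coeff m *ᵥ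
            fun i : Fin n => Z i.succ 0 := by
  rw [detPencil, det_eq_mul_sub_dotProduct_adjugate_mulVec]
  set P := (X : K[X]) • (cornerDiagonal 0).map C + Z.map C with hP
  have block : P.submatrix Fin.succ Fin.succ = charmatrix (-Z.submatrix Fin.succ Fin.succ) := by
    ext1 i j
    by_cases hij : i = j
    · subst hij
      simp [hP, cornerDiagonal]
    · simp [hP, cornerDiagonal, hij]
  have corner : P 0 0 = C (Z 0 0) := by simp [hP, cornerDiagonal]
  have row (j : Fin n) : P 0 j.succ = C (Z 0 j.succ) := by
    simp [hP, cornerDiagonal, (Fin.succ_ne_zero j).symm]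
  have col (i : Fin n) : P i.succ 0 = C (Z i.succ 0) := by simp [hP, cornerDiagonal]
  simp only [block, corner, row, col, coeff_sub, coeff_C_mul, dotProduct, mulVec,
    finsetSum_coeff, coeff_mul_C, matPolyEquiv_coeff_apply, charpoly]

theorem coeff_detPencil_cornerDiagonal_zero_self :
    (detPencil (cornerDiagonal 0) Z).coeff n = Z 0 0 := by
  nontriviality K
  have monic := (charpoly_monic (-Z.submatrix Fin.succ Fin.succ)).coeff_natDegree
  rw [charpoly_natDegree_eq_dim, Fintype.card_fin] at monic
  rw [coeff_detPencil_cornerDiagonal_zero, monic,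
    coeff_matPolyEquiv_adjugate_charmatrix_eq_zero _ (by simp)]
  simp

theorem natDegree_detPencil_cornerDiagonal_zero_le :
    (detPencil (cornerDiagonal 0) Z).natDegree ≤ n := by
  nontriviality K
  refine natDegree_le_iff_coeff_eq_zero.2 fun m hm => ?_
  rw [coeff_detPencil_cornerDiagonal_zero, coeff_eq_zero_of_natDegree_lt (by simpa),
    coeff_matPolyEquiv_adjugate_charmatrix_eq_zero _ (by simpa using hm.le)]
  simp

theorem detPencil_cornerDiagonal_zero_single_add (c : K) :
    detPencil (cornerDiagonal 0) (single 0 0 c + Z) =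
      C c * (-Z.submatrix Fin.succ Fin.succ).charpoly + detPencil (cornerDiagonal 0) Z := by
  have block : (single 0 0 c + Z).submatrix Fin.succ Fin.succ = Z.submatrix Fin.succ Fin.succ := by
    ext
    simp [single, (Fin.succ_ne_zero _).symm]
  ext m
  rw [coeff_add, coeff_C_mul, coeff_detPencil_cornerDiagonal_zero,
    coeff_detPencil_cornerDiagonal_zero, block]
  simp [single, add_mul, add_sub_assoc, (Fin.succ_ne_zero _).symm]

theorem detPencil_cornerDiagonal_zero_add_smul (a t : K) :
    detPencil (cornerDiagonal 0) (Z + t • cornerDiagonal a) =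
      taylor t (C (t * a) * (-Z.submatrix Fin.succ Fin.succ).charpoly +
        detPencil (cornerDiagonal 0) Z) := by
  rw [← detPencil_cornerDiagonal_zero_single_add, taylor_detPencil,
    cornerDiagonal_eq_single_add a, smul_add, smul_single, smul_eq_mul]
  congr 1
  abel

end CornerDiagonal

theorem Fk_eq_coeff_detPencil {n k : ℕ} (hk1 : 1 ≤ k) (hkn : k ≤ n)
    {R : Matrix (Fin (n + 1)) (Fin (n + 1)) ℝ} (hR : R.IsSymm) :
    Fk k R = (detPencil (cornerDiagonal 0) R).coeff (n - k) := by
  have col : (fun i : Fin n => R i.succ 0) = xVec R := funext fun i => hR.apply _ _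
  have block : R.submatrix Fin.succ Fin.succ = lowerBlock R := rfl
  rw [coeff_detPencil_cornerDiagonal_zero, col, block, Fk, sigmaMat_eq_coeff_charpoly_neg _ hkn,
    newtonT_eq_coeff_matPolyEquiv_adjugate _ (by lia), show n - 1 - (k - 1) = n - k by lia]
  rfl

section SymmetricMatrices

variable {ι K L : Type*}

/-- The symmetric matrix whose entry at `(i, j)` is `x s(i, j)`. Polynomials in the entries of a
symmetric matrix are thereby encoded as elements of `MvPolynomial (Sym2 ι) K`. -/
def symMatrix (x : Sym2 ι → K) : Matrix ι ι K :=
  of fun i j => x s(i, j)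

theorem exists_symMatrix_eq {A : Matrix ι ι K} (hA : A.IsSymm) :
    ∃ x : Sym2 ι → K, symMatrix x = A :=
  ⟨Sym2.lift ⟨A, fun i j => hA.apply j i⟩, rfl⟩

theorem isHermitian_symMatrix_ofReal_comp (x : Sym2 ι → ℝ) :
    (symMatrix (Complex.ofReal ∘ x)).IsHermitian := by
  ext i j
  simp [symMatrix, Sym2.eq_swap]

variable [CommRing K] [CommRing L]

theorem symMatrix_add (x y : Sym2 ι → K) : symMatrix (x + y) = symMatrix x + symMatrix y :=
  rfl

theorem symMatrix_smul (c : K) (x : Sym2 ι → K) : symMatrix (c • x) = c • symMatrix x :=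
  rfl

variable [Fintype ι] [DecidableEq ι]

/-- The coefficient of `X ^ m` in `det (X • A + Z)`, as a polynomial in the entries of the symmetric
matrix `Z`. -/
noncomputable def detPencilCoeff (A : Matrix ι ι K) (m : ℕ) : MvPolynomial (Sym2 ι) K :=
  (detPencil (A.map MvPolynomial.C) (symMatrix MvPolynomial.X)).coeff m

theorem eval_detPencilCoeff (A : Matrix ι ι K) (m : ℕ) (x : Sym2 ι → K) :
    MvPolynomial.eval x (detPencilCoeff A m) = (detPencil A (symMatrix x)).coeff m := by
  rw [detPencilCoeff, ← coeff_map, map_detPencil]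
  congr 2 <;> ext <;> simp [symMatrix]

theorem map_detPencilCoeff (φ : K →+* L) (A : Matrix ι ι K) (m : ℕ) :
    (detPencilCoeff A m).map φ = detPencilCoeff (A.map φ) m := by
  rw [detPencilCoeff, ← coeff_map, map_detPencil, detPencilCoeff]
  congr 2 <;> ext1 <;> simp [symMatrix]

theorem isHomogeneous_detPencilCoeff (A : Matrix ι ι K) {m d : ℕ}
    (hmd : m + d = Fintype.card ι) : (detPencilCoeff A m).IsHomogeneous d :=
  isHomogeneous_coeff_detPencil A (fun _ _ => MvPolynomial.isHomogeneous_X _ _) hmd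

theorem mem_hyperbolicityCone_detPencilCoeff {A E : Matrix ι ι ℝ}
    {m : ℕ} {x e : Sym2 ι → ℝ} (he : symMatrix e = E)
    (hx : ∀ t : ℝ, 0 ≤ t → 0 < (detPencil A (symMatrix x + t • E)).coeff m) :
    x ∈ hyperbolicityCone ((detPencilCoeff A m).map Complex.ofRealHom) e := fun t ht => by
  rw [eval_ofReal_comp_map_ofRealHom, eval_detPencilCoeff, symMatrix_add, symMatrix_smul, he]
  exact Complex.ofReal_ne_zero.2 (hx t ht).ne'

theorem det_add_diagonal_ne_zero {A : Matrix ι ι ℂ} (hA : A.IsHermitian) {w : ι → ℂ}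
    (hw : ∀ i, 0 < (w i).im) : (A + diagonal w).det ≠ 0 := by
  intro hdet
  obtain ⟨v, hv, hker⟩ := exists_mulVec_eq_zero_iff.2 hdet
  have hquad : star v ⬝ᵥ A *ᵥ v + ∑ i, w i * Complex.normSq (v i) = 0 := by
    rw [← dotProduct_zero (star v), ← hker, add_mulVec, dotProduct_add]
    congr 1
    refine Finset.sum_congr rfl fun i _ => ?_
    rw [mulVec_diagonal, Complex.normSq_eq_conj_mul_self, Pi.star_apply, RCLike.star_def]
    ring
  have him : ∑ i, (w i).im * Complex.normSq (v i) = 0 := by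
    have hreal : (star v ⬝ᵥ A *ᵥ v).im = 0 := hA.im_star_dotProduct_mulVec_self v
    simpa [hreal] using congrArg Complex.im hquad
  obtain ⟨i, hi⟩ := Function.ne_iff.1 hv
  refine him.not_gt (Finset.sum_pos' (fun j _ => ?_) ⟨i, Finset.mem_univ i, ?_⟩)
  · exact mul_nonneg (hw j).le (Complex.normSq_nonneg _)
  · exact mul_pos (hw i) (Complex.normSq_pos.2 hi)

end SymmetricMatrices

theorem isHyperbolicAlong_detPencilCoeff {n m : ℕ} (hm : m ≤ n) {M : ℝ} (hM : 0 < M)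
    {e : Sym2 (Fin (n + 1)) → ℝ} (he : symMatrix e = cornerDiagonal M) :
    IsHyperbolicAlong ((detPencilCoeff (cornerDiagonal (0 : ℝ)) m).map Complex.ofRealHom) e := by
  intro x z hz
  have he' : symMatrix (Complex.ofReal ∘ e) = cornerDiagonal (M : ℂ) :=
    (congrArg (·.map Complex.ofRealHom) he).trans (map_cornerDiagonal _ _)
  have hx := isHermitian_symMatrix_ofReal_comp x
  rw [map_detPencilCoeff, map_cornerDiagonal, map_zero, eval_detPencilCoeff, symMatrix_add,
    symMatrix_smul, he']
  refine coeff_ne_zero_of_forall_notMem (convex_halfSpace_im_lt 0) (by simp)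
    (hm.trans (le_natDegree_of_ne_zero ?_)) fun u hu => ?_
  · rw [coeff_detPencil_cornerDiagonal_zero_self]
    intro h0
    have him : (symMatrix (Complex.ofReal ∘ x) 0 0).im = 0 :=
      Complex.conj_eq_iff_im.1 (hx.apply 0 0)
    have := congrArg Complex.im h0
    simp [cornerDiagonal, him, hz.ne', hM.ne'] at this
  · rw [eval_detPencil, add_left_comm, cornerDiagonal, cornerDiagonal, ← diagonal_smul,
      ← diagonal_smul, diagonal_add]
    refine det_add_diagonal_ne_zero hx fun i => ?_
    have hu : 0 ≤ u.im := by simpa using hu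
    refine Fin.cases ?_ (fun i => ?_) i
    · simp [hz, hM]
    · simpa using by linarith

section Growth

open Filter

theorem eventually_forall_eval_pos {a b : ℝ[X]} (ha : 0 < a.coeff 0)
    (hab : ∀ i < a.natDegree, 0 < b.coeff i) (hb : ∀ i, 0 ≤ b.coeff i) :
    ∀ᶠ M : ℝ in atTop, ∀ t, 0 ≤ t → 0 < t * M * b.eval t + a.eval t := by
  have hcoeff : ∀ᶠ M : ℝ in atTop, ∀ i ∈ Finset.range a.natDegree,
      -a.coeff (i + 1) ≤ M * b.coeff i :=
    (Finset.eventually_all _).2 fun i hi =>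
      (tendsto_id.atTop_mul_const (hab i (Finset.mem_range.1 hi))).eventually_ge_atTop _
  filter_upwards [hcoeff, eventually_ge_atTop 0] with M hM hM0 t ht
  have hnonneg : 0 ≤ (C M * b + a.divX).eval t := by
    rw [eval_eq_sum_range]
    refine Finset.sum_nonneg fun i _ => mul_nonneg ?_ (pow_nonneg ht i)
    rw [coeff_add, coeff_divX, coeff_C_mul]
    obtain hi | hi := lt_or_ge i a.natDegree
    · linarith [hM i (Finset.mem_range.2 hi)]
    · rw [coeff_eq_zero_of_natDegree_lt (by lia : a.natDegree < i + 1), add_zero]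
      exact mul_nonneg hM0 (hb i)
  calc 0 < t * (C M * b + a.divX).eval t + a.coeff 0 := by positivity
    _ = t * M * b.eval t + (a.divX * X + C (a.coeff 0)).eval t := by simp; ring
    _ = t * M * b.eval t + a.eval t := by rw [divX_mul_X_add]

theorem GammaPlus.coeff_charpoly_neg_pos {n k : ℕ} {r : Matrix (Fin n) (Fin n) ℝ}
    (hr : GammaPlus k r) {m : ℕ} (hm : n ≤ m + k) (hmn : m ≤ n) :
    0 < (-r).charpoly.coeff m := by
  rw [show m = n - (n - m) by lia, ← sigmaMat_eq_coeff_charpoly_neg r (Nat.sub_le n m)]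
  obtain rfl | hlt := hmn.eq_or_lt
  · simp [sigmaMat_zero]
  · exact hr _ (by lia) (by lia)

theorem inS.eventually_forall_coeff_detPencil_pos {n k : ℕ} (hk1 : 1 ≤ k) (hkn : k ≤ n)
    {R : Matrix (Fin (n + 1)) (Fin (n + 1)) ℝ} (hR : inS k R) :
    ∀ᶠ M : ℝ in atTop, ∀ t : ℝ, 0 ≤ t →
      0 < (detPencil (cornerDiagonal 0) (R + t • cornerDiagonal M)).coeff (n - k) := by
  obtain ⟨hsymm, hgamma, hF⟩ := hR
  have hblock : R.submatrix Fin.succ Fin.succ = lowerBlock R := rfl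
  have hgrowth := eventually_forall_eval_pos
    (a := hasseDeriv (n - k) (detPencil (cornerDiagonal 0) R))
    (b := hasseDeriv (n - k) (-lowerBlock R).charpoly) ?_ (fun i hi => ?_) (fun i => ?_)
  · filter_upwards [hgrowth] with M hM t ht
    rw [detPencil_cornerDiagonal_zero_add_smul, taylor_coeff, ← smul_eq_C_mul, map_add, map_smul,
      eval_add, eval_smul, hblock, smul_eq_mul]
    exact hM t ht
  · rw [hasseDeriv_coeff, zero_add, Nat.choose_self, ← Fk_eq_coeff_detPencil hk1 hkn hsymm]
    simpa using hF
  · have hik : i < k := by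
      have := natDegree_hasseDeriv_le (detPencil (cornerDiagonal 0) R) (n - k)
      have := natDegree_detPencil_cornerDiagonal_zero_le R
      lia
    rw [hasseDeriv_coeff]
    exact mul_pos (Nat.cast_pos.2 (Nat.choose_pos (by lia)))
      (hgamma.coeff_charpoly_neg_pos (by lia) (by lia))
  · rw [hasseDeriv_coeff]
    refine mul_nonneg (Nat.cast_nonneg _) ?_
    obtain hi | hi := le_or_gt (i + (n - k)) n
    · exact (hgamma.coeff_charpoly_neg_pos (by lia) hi).le
    · rw [coeff_eq_zero_of_natDegree_lt (by simpa)]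

end Growth

theorem inS.Fk_add_smul_pos {n k : ℕ} (hk1 : 1 ≤ k) (hkn : k ≤ n)
    {R R' : Matrix (Fin (n + 1)) (Fin (n + 1)) ℝ} (hR : inS k R) (hR' : inS k R')
    {s s' : ℝ} (hs : 0 < s) (hs' : 0 < s') : 0 < Fk k (s • R + s' • R') := by
  obtain ⟨M, ⟨hM, hM'⟩, hM0⟩ := ((hR.eventually_forall_coeff_detPencil_pos hk1 hkn).and
    (hR'.eventually_forall_coeff_detPencil_pos hk1 hkn) |>.and
      (Filter.eventually_gt_atTop 0)).exists
  have hsymm : (s • R + s' • R').IsSymm := (hR.1.smul s).add (hR'.1.smul s')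
  have hFk := hR.2.2
  rw [Fk_eq_coeff_detPencil hk1 hkn hR.1] at hFk
  rw [Fk_eq_coeff_detPencil hk1 hkn hsymm]
  obtain ⟨x, rfl⟩ := exists_symMatrix_eq hR.1
  obtain ⟨x', rfl⟩ := exists_symMatrix_eq hR'.1
  obtain ⟨e, he⟩ := exists_symMatrix_eq (A := cornerDiagonal (n := n) M) (isSymm_diagonal _)
  let g := detPencilCoeff (cornerDiagonal (0 : ℝ) : Matrix (Fin (n + 1)) (Fin (n + 1)) ℝ) (n - k)
  have hg : g.IsHomogeneous (k + 1) :=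
    isHomogeneous_detPencilCoeff _ (by rw [Fintype.card_fin]; lia)
  have hhyp : IsHyperbolicAlong (g.map Complex.ofRealHom) e :=
    isHyperbolicAlong_detPencilCoeff (Nat.sub_le n k) hM0 he
  have hx := mem_hyperbolicityCone_detPencilCoeff he hM
  have hx' := mem_hyperbolicityCone_detPencilCoeff he hM'
  have hsum := hyperbolicityCone.add_mem hhyp (hg.map _)
    (hyperbolicityCone.smul_mem (hg.map _) hx hs) (hyperbolicityCone.smul_mem (hg.map _) hx' hs')
  rw [← eval_detPencilCoeff] at hFk
  rw [← symMatrix_smul, ← symMatrix_smul, ← symMatrix_add, ← eval_detPencilCoeff]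
  exact hyperbolicityCone.eval_pos_of_eval_pos hhyp hg hx hsum hFk

/-- The block diagonal matrix with blocks `a` and `r`. -/
def cornerBlock {n : ℕ} (a : ℝ) (r : Matrix (Fin n) (Fin n) ℝ) :
    Matrix (Fin (n + 1)) (Fin (n + 1)) ℝ :=
  Matrix.of fun i j => Fin.cases (Fin.cases a (fun _ => 0) j)
    (fun i' => Fin.cases 0 (fun j' => r i' j') j) i

theorem lowerBlock_cornerBlock {n : ℕ} (a : ℝ) (r : Matrix (Fin n) (Fin n) ℝ) :
    lowerBlock (cornerBlock a r) = r := by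
  ext i j
  simp [lowerBlock, cornerBlock]

theorem Fk_cornerBlock {n : ℕ} (k : ℕ) (a : ℝ) (r : Matrix (Fin n) (Fin n) ℝ) :
    Fk k (cornerBlock a r) = a * sigmaMat r k := by
  have hx : xVec (cornerBlock a r) = 0 := by
    ext
    simp [xVec, cornerBlock]
  rw [Fk, hx, lowerBlock_cornerBlock, zero_dotProduct, sub_zero]
  simp [cornerBlock]

theorem smul_cornerBlock_add_smul_cornerBlock {n : ℕ} (s s' a a' : ℝ)
    (r r' : Matrix (Fin n) (Fin n) ℝ) : s • cornerBlock a r + s' • cornerBlock a' r' =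
      cornerBlock (s * a + s' * a') (s • r + s' • r') := by
  ext i j
  refine Fin.cases (Fin.cases ?_ (fun j => ?_) j) (fun i => Fin.cases ?_ (fun j => ?_) j) i <;>
    simp [cornerBlock]

theorem GammaPlus.of_le {n k l : ℕ} {r : Matrix (Fin n) (Fin n) ℝ} (hr : GammaPlus k r)
    (hlk : l ≤ k) : GammaPlus l r :=
  fun j hj hjl => hr j hj (hjl.trans hlk)

theorem GammaPlus.inS_cornerBlock {n k : ℕ} (hk : 1 ≤ k) {r : Matrix (Fin n) (Fin n) ℝ}
    (hsymm : r.IsSymm) (hr : GammaPlus k r) : inS k (cornerBlock 1 r) := by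
  refine ⟨?_, by rwa [lowerBlock_cornerBlock], ?_⟩
  · ext i j
    refine Fin.cases (Fin.cases ?_ (fun j => ?_) j) (fun i => Fin.cases ?_ (fun j => ?_) j) i <;>
      simp [cornerBlock, hsymm.apply]
  · rw [Fk_cornerBlock, one_mul]
    exact hr k hk le_rfl

theorem GammaPlus.add_smul {n k : ℕ} (hkn : k ≤ n) {r r' : Matrix (Fin n) (Fin n) ℝ}
    (hsymm : r.IsSymm) (hsymm' : r'.IsSymm) (hr : GammaPlus k r) (hr' : GammaPlus k r')
    {s s' : ℝ} (hs : 0 < s) (hs' : 0 < s') : GammaPlus k (s • r + s' • r') := by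
  intro j hj hjk
  have hpos := inS.Fk_add_smul_pos hj (hjk.trans hkn)
    ((hr.of_le hjk).inS_cornerBlock hj hsymm) ((hr'.of_le hjk).inS_cornerBlock hj hsymm') hs hs'
  rw [smul_cornerBlock_add_smul_cornerBlock, Fk_cornerBlock] at hpos
  exact pos_of_mul_pos_right hpos (by positivity)

/-- `S` is a convex cone. -/
theorem S_is_convex_cone (n k : ℕ) (hn : 1 ≤ n) (hk1 : 1 ≤ k) (hkn : k ≤ n)
    (R R' : Matrix (Fin (n + 1)) (Fin (n + 1)) ℝ)
    (hR : inS k R) (hR' : inS k R')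
    (s s' : ℝ) (hs : 0 < s) (hs' : 0 < s') :
    inS k (s • R + s' • R') := by
  exact ⟨(hR.1.smul s).add (hR'.1.smul s'),
    GammaPlus.add_smul hkn (hR.1.submatrix Fin.succ) (hR'.1.submatrix Fin.succ)
      hR.2.1 hR'.2.1 hs hs',
    inS.Fk_add_smul_pos hk1 hkn hR hR' hs hs'⟩
end

section
/- Let n ≥ 1, 1 ≤ k ≤ n, let r₀₀, r₁, …, r_n be real numbers and x ∈ ℝ^n, and let p_{k+1}(t) = (r₀₀ + t) σ_k(r+tI) − Σ_{i=1}^n q_{i,k}(t) x_i². Let α₁ ≤ α₂ ≤ … ≤ α_{k+1} be the k+1 real roots of p_{k+1} and β₁ ≤ … ≤ β_k the k real roots of σ_k(r+tI), each listed with multiplicity in nondecreasing order. Then σ_k(r+tI) interlaces p_{k+1}: α₁ ≤ β₁ ≤ α₂ ≤ β₂ ≤ … ≤ β_k ≤ α_{k+1}. -/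
open Polynomial

/-- `σ_m(r+tI) = Σ_{1≤i₁<…<i_m≤n} (t+r_{i₁})⋯(t+r_{i_m})` as a real polynomial in `t`. -/
noncomputable def sigmaTP (n : ℕ) (r : Fin n → ℝ) (m : ℕ) : Polynomial ℝ :=
  ∑ s ∈ Finset.powersetCard m (Finset.univ : Finset (Fin n)),
    ∏ i ∈ s, (X + C (r i))

/-- `q_{i,k}(t) = Σ_{j=0}^{k−1} (−1)^j σ_{k−1−j}(r+tI) (t+r_i)^j`. -/
noncomputable def qPoly (n : ℕ) (r : Fin n → ℝ) (i : Fin n) (k : ℕ) : Polynomial ℝ :=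
  ∑ j ∈ Finset.range k, ((-1 : ℝ) ^ j) • (sigmaTP n r (k - 1 - j) * (X + C (r i)) ^ j)

/-- `p_{k+1}(t) = (r₀₀ + t) σ_k(r+tI) − Σ_{i=1}^n q_{i,k}(t) x_i²`. -/
noncomputable def pPoly (n k : ℕ) (r₀₀ : ℝ) (r : Fin n → ℝ) (x : Fin n → ℝ) :
    Polynomial ℝ :=
  (X + C r₀₀) * sigmaTP n r k - ∑ i : Fin n, ((x i) ^ 2) • qPoly n r i k

/-- `π_n(t) = (t+r₁)⋯(t+r_n)`. -/
noncomputable def piN (n : ℕ) (r : Fin n → ℝ) : Polynomial ℝ :=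
  ∏ i : Fin n, (X + C (r i))

/-- `π_{i,n}(t) = ∏_{j≠i} (t+r_j)`. -/
noncomputable def piIN (n : ℕ) (r : Fin n → ℝ) (i : Fin n) : Polynomial ℝ :=
  ∏ j ∈ Finset.univ.erase i, (X + C (r j))

/-!
The polynomial `q_{i,k}` is `σ_{k-1}` of the shifted variables other than `t + r_i`. An elementary
symmetric polynomial does not vanish at points `z_i` of the open upper half-plane: up to a factor it
is the value at `0` of a derivative of `∏ (X + z_i)`, whose roots stay in the lower half-plane by
Gauss–Lucas. Since it is affine in each variable, this forces `Im (q_{i,k} / σ_k) ≤ 0` there. Hence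
`p_{k+1} / σ_k = r₀₀ + t - ∑ x_i² q_{i,k} / σ_k` maps the upper half-plane to itself.

In particular a continuous branch of `arg (p_{k+1} / σ_k)` on the upper half-plane omits the
multiples of `π`. Its boundary value at a real `c` is a multiple of `π` determined by the number of
roots of `p_{k+1}` minus the number of roots of `σ_k` in `(-∞, c]`. So any two of these differences
are at most one apart; they are `0` far to the left and `1` far to the right, hence always `0` or
`1`, which is interlacing.
-/

open Complex Filter Topology

section ElementarySymmetric

theorem map_val_eq_cons_map_erase {ι A : Type*} [DecidableEq ι] {s : Finset ι} {i : ι}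
    (hi : i ∈ s) (y : ι → A) : s.val.map y = y i ::ₘ (s.erase i).val.map y := by
  rw [← Multiset.map_cons, Finset.erase_val, Multiset.cons_erase hi]

variable {R : Type*}

theorem esymm_cons_succ [CommSemiring R] (a : R) (s : Multiset R) (m : ℕ) :
    (a ::ₘ s).esymm (m + 1) = s.esymm (m + 1) + a * s.esymm m := by
  simp [Multiset.esymm, Multiset.sum_map_mul_left]

theorem sum_range_neg_one_pow_mul_esymm_cons [CommRing R] (a : R) (s : Multiset R) (m : ℕ) :
    ∑ j ∈ Finset.range (m + 1), (-1) ^ j * ((a ::ₘ s).esymm (m - j) * a ^ j) = s.esymm m := by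
  induction m with
  | zero => simp [Multiset.esymm]
  | succ m ih =>
    have shift : ∑ j ∈ Finset.range (m + 1),
        (-1) ^ (j + 1) * ((a ::ₘ s).esymm (m + 1 - (j + 1)) * a ^ (j + 1)) = -a * s.esymm m := by
      rw [← ih, Finset.mul_sum]
      refine Finset.sum_congr rfl fun j _ => ?_
      rw [Nat.add_sub_add_right]
      ring
    rw [Finset.sum_range_succ', shift, Nat.sub_zero, esymm_cons_succ]
    ring

end ElementarySymmetric

section HalfPlane

theorem rootSet_iterate_derivative_subset_of_convex {P : ℂ[X]} {K : Set ℂ} (hK : Convex ℝ K)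
    (hP : P.rootSet ℂ ⊆ K) (m : ℕ) : (derivative^[m] P).rootSet ℂ ⊆ K := by
  induction m with
  | zero => exact hP
  | succ m ih =>
    rw [Function.iterate_succ_apply']
    rcases le_or_gt (derivative^[m] P).degree 0 with hdeg | hdeg
    · simp [derivative_of_natDegree_zero (natDegree_eq_zero_iff_degree_le_zero.2 hdeg)]
    · exact (rootSet_derivative_subset_convexHull_rootSet hdeg).trans (convexHull_min ih hK)

theorem esymm_ne_zero_of_forall_im_pos {s : Multiset ℂ} (hs : ∀ z ∈ s, 0 < z.im) {m : ℕ}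
    (hm : m ≤ s.card) : s.esymm m ≠ 0 := by
  intro hzero
  obtain ⟨l, hl⟩ := Nat.exists_eq_add_of_le hm
  set P : ℂ[X] := (s.map fun z => X + C z).prod with hP
  have coeff_P : ∀ j, (derivative^[l] P).coeff j = (j + l).descFactorial l • P.coeff (j + l) :=
    coeff_iterate_derivative P
  have hne : derivative^[l] P ≠ 0 := by
    intro h
    have htop := coeff_P m
    rw [h, coeff_zero, hP, Multiset.prod_X_add_C_coeff s hl.ge] at htop
    simp [hl, Multiset.esymm, eq_comm, Nat.descFactorial_eq_zero_iff_lt] at htop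
  have hroot : (0 : ℂ) ∈ (derivative^[l] P).rootSet ℂ := by
    rw [mem_rootSet, coe_aeval_eq_eval, ← coeff_zero_eq_eval_zero, coeff_P, zero_add, hP,
      Multiset.prod_X_add_C_coeff s (by omega), show s.card - l = m by omega, hzero]
    exact ⟨hne, smul_zero _⟩
  have hlower : P.rootSet ℂ ⊆ {z | z.im < 0} := by
    intro w hw
    obtain ⟨z, hz, hwz⟩ : ∃ z ∈ s, w + z = 0 := by
      simpa [hP, eval_multiset_prod, Multiset.prod_eq_zero_iff] using (mem_rootSet.1 hw).2
    have := hs z hz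
    rw [eq_neg_of_add_eq_zero_right hwz, neg_im] at this
    exact neg_pos.1 this
  simpa using rootSet_iterate_derivative_subset_of_convex (convex_halfSpace_im_lt 0) hlower l hroot

theorem im_le_im_esymm_cons_div_esymm {a : ℂ} {s : Multiset ℂ}
    (hs : ∀ z ∈ s, 0 < z.im) {m : ℕ} (hm : m ≤ s.card) :
    a.im ≤ ((a ::ₘ s).esymm (m + 1) / s.esymm m).im := by
  have hne := esymm_ne_zero_of_forall_im_pos hs hm
  by_contra! hlt
  -- Replacing `a` by `w` keeps all points in the upper half-plane but kills the affine function
  -- `a ↦ (a ::ₘ s).esymm (m + 1)`.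
  set w := a - (a ::ₘ s).esymm (m + 1) / s.esymm m with hw
  have hw_im : 0 < w.im := by simpa [hw] using hlt
  refine esymm_ne_zero_of_forall_im_pos (s := w ::ₘ s) (m := m + 1) ?_ (by simpa) ?_
  · simpa [hw_im] using hs
  · simp only [esymm_cons_succ, hw]
    field_simp
    ring

theorem im_inv_neg_of_im_pos {z : ℂ} (hz : 0 < z.im) : z⁻¹.im < 0 := by
  have hz0 : z ≠ 0 := fun h => by simp [h] at hz
  rw [inv_im]
  exact div_neg_of_neg_of_pos (neg_neg_of_pos hz) (normSq_pos.2 hz0)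

end HalfPlane

section Interlacing

theorem continuousWithinAt_arg_of_ne_zero {z : ℂ} (hz : z ≠ 0) :
    ContinuousWithinAt arg {w | 0 ≤ w.im} z := by
  by_cases hmem : z ∈ slitPlane
  · exact (continuousAt_arg hmem).continuousWithinAt
  · obtain ⟨hre, him⟩ : z.re ≤ 0 ∧ z.im = 0 := by simpa [mem_slitPlane_iff] using hmem
    have hre0 : z.re ≠ 0 := fun h => hz (Complex.ext h him)
    exact continuousWithinAt_arg_of_re_neg_of_im_zero (hre.lt_of_ne hre0) him

variable {ι κ : Type*} [Fintype ι] [Fintype κ]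

/-- A branch of the argument of `∏ (t - α i) / ∏ (t - β j)`, continuous on the closed upper
half-plane away from the points `α i` and `β j`. -/
noncomputable def argQuotient (α : ι → ℝ) (β : κ → ℝ) (t : ℂ) : ℝ :=
  ∑ i, arg (t - α i) - ∑ j, arg (t - β j)

variable {α : ι → ℝ} {β : κ → ℝ}

theorem continuousWithinAt_argQuotient {t : ℂ} (hα : ∀ i, t ≠ α i) (hβ : ∀ j, t ≠ β j) :
    ContinuousWithinAt (argQuotient α β) {w | 0 < w.im} t := by
  have harg : ∀ a : ℝ, t ≠ a → ContinuousWithinAt (fun w : ℂ => arg (w - a)) {w | 0 < w.im} t :=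
    fun a ha => ContinuousWithinAt.comp (g := arg) (f := fun w : ℂ => w - a)
      (continuousWithinAt_arg_of_ne_zero (sub_ne_zero.2 ha))
      (continuous_sub_right (a : ℂ)).continuousWithinAt
      fun w (hw : 0 < w.im) => by simpa using hw.le
  exact (tendsto_finsetSum _ fun i _ => harg _ (hα i)).sub
    (tendsto_finsetSum _ fun j _ => harg _ (hβ j))

theorem im_prod_div_prod {t : ℂ} (hα : ∀ i, t ≠ α i) (hβ : ∀ j, t ≠ β j) :
    ((∏ i, (t - α i)) / ∏ j, (t - β j)).im =
      ‖(∏ i, (t - α i)) / ∏ j, (t - β j)‖ * Real.sin (argQuotient α β t) := by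
  have hexp : (∏ i, (t - α i)) / ∏ j, (t - β j) =
      exp (∑ i, log (t - α i) - ∑ j, log (t - β j)) := by
    rw [exp_sub, exp_sum, exp_sum]
    simp only [exp_log (sub_ne_zero.2 (hα _)), exp_log (sub_ne_zero.2 (hβ _))]
  rw [hexp, exp_im, norm_exp]
  simp [argQuotient, log_im]

theorem arg_ofReal_sub_ofReal (c a : ℝ) :
    arg ((c : ℂ) - a) = Real.pi - if a ≤ c then Real.pi else 0 := by
  rw [← ofReal_sub]
  split_ifs with h
  · rw [arg_ofReal_of_nonneg (sub_nonneg.2 h), sub_self]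
  · rw [arg_ofReal_of_neg (sub_neg.2 (not_le.1 h)), sub_zero]

/-- The number of zeros `α i` of `∏ (t - α i) / ∏ (t - β j)` in `(-∞, c]` minus the number of poles
`β j` there. Interlacing confines it to `{0, 1}`; it is an integer so that the difference does not
truncate. -/
noncomputable def countExcess (α : ι → ℝ) (β : κ → ℝ) (c : ℝ) : ℤ :=
  Finset.card {i | α i ≤ c} - Finset.card {j | β j ≤ c}

theorem argQuotient_ofReal (α : ι → ℝ) (β : κ → ℝ) (c : ℝ) :
    argQuotient α β c = (Fintype.card ι - Fintype.card κ - countExcess α β c : ℤ) * Real.pi := by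
  simp only [argQuotient, countExcess, arg_ofReal_sub_ofReal, Finset.sum_sub_distrib,
    Finset.sum_ite, Finset.sum_const, nsmul_eq_mul, Finset.card_univ]
  push_cast
  ring

theorem countExcess_le_countExcess_add_one
    (h : ∀ t : ℂ, 0 < t.im → ((∏ i, (t - α i)) / ∏ j, (t - β j)).im ≠ 0) {c d : ℝ}
    (hc : c ∉ Set.range α ∪ Set.range β) (hd : d ∉ Set.range α ∪ Set.range β) :
    countExcess α β c ≤ countExcess α β d + 1 := by
  set H : Set ℂ := {w | 0 < w.im} with hH
  have ne_ofReal : ∀ t ∈ H, ∀ a : ℝ, t ≠ a := by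
    rintro _ ht a rfl
    simp [hH] at ht
  have continuousOn : ContinuousOn (argQuotient α β) H := fun t ht =>
    continuousWithinAt_argQuotient (fun i => ne_ofReal t ht _) fun j => ne_ofReal t ht _
  have isPreconnected : IsPreconnected H := (convex_halfSpace_im_gt 0).isPreconnected
  have neBot : ∀ e : ℝ, (𝓝[H] (e : ℂ)).NeBot := fun e => by
    rw [← mem_closure_iff_nhdsWithin_neBot, hH, closure_setOfPred_lt_im]
    simp
  have tendsto : ∀ e : ℝ, e ∉ Set.range α ∪ Set.range β →
      Tendsto (argQuotient α β) (𝓝[H] (e : ℂ)) (𝓝 (argQuotient α β e)) := fun e he =>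
    continuousWithinAt_argQuotient (fun i hi => he (.inl ⟨i, (ofReal_injective hi).symm⟩))
      fun j hj => he (.inr ⟨j, (ofReal_injective hj).symm⟩)
  by_contra! hlt
  -- The jump forces `argQuotient α β` through a multiple of `π`, where the quotient is real.
  set N : ℤ := Fintype.card ι - Fintype.card κ - countExcess α β d - 1
  have hmem : N * Real.pi ∈ Set.Ioo (argQuotient α β c) (argQuotient α β d) := by
    simp only [argQuotient_ofReal, Set.mem_Ioo, mul_lt_mul_iff_left₀ Real.pi_pos, Int.cast_lt]
    omega
  have := neBot c
  have := neBot d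
  obtain ⟨t, ht, htN⟩ := isPreconnected.intermediate_value_Ioo (l₁ := 𝓝[H] (c : ℂ))
    (l₂ := 𝓝[H] (d : ℂ)) inf_le_right inf_le_right continuousOn (tendsto c hc) (tendsto d hd) hmem
  refine h t ht ?_
  rw [im_prod_div_prod (fun i => ne_ofReal t ht _) fun j => ne_ofReal t ht _, htN,
    Real.sin_int_mul_pi, mul_zero]

theorem countExcess_mem_Icc (hcard : Fintype.card ι = Fintype.card κ + 1)
    (h : ∀ t : ℂ, 0 < t.im → ((∏ i, (t - α i)) / ∏ j, (t - β j)).im ≠ 0) {c : ℝ}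
    (hc : c ∉ Set.range α ∪ Set.range β) : countExcess α β c ∈ Set.Icc 0 1 := by
  have hfinite : (Set.range α ∪ Set.range β).Finite :=
    (Set.finite_range α).union (Set.finite_range β)
  obtain ⟨l, hl⟩ := hfinite.bddBelow
  obtain ⟨u, hu⟩ := hfinite.bddAbove
  have left : countExcess α β (l - 1) = 0 := by
    have hα : ∀ i, ¬ α i ≤ l - 1 := fun i => by linarith [hl (.inl ⟨i, rfl⟩)]
    have hβ : ∀ j, ¬ β j ≤ l - 1 := fun j => by linarith [hl (.inr ⟨j, rfl⟩)]
    simp [countExcess, hα, hβ]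
  have right : countExcess α β (u + 1) = 1 := by
    have hα : ∀ i, α i ≤ u + 1 := fun i => by linarith [hu (.inl ⟨i, rfl⟩)]
    have hβ : ∀ j, β j ≤ u + 1 := fun j => by linarith [hu (.inr ⟨j, rfl⟩)]
    simp [countExcess, hα, hβ, hcard]
  have hl' : l - 1 ∉ Set.range α ∪ Set.range β := fun hmem => by linarith [hl hmem]
  have hu' : u + 1 ∉ Set.range α ∪ Set.range β := fun hmem => by linarith [hu hmem]
  constructor
  · linarith [countExcess_le_countExcess_add_one h hu' hc]
  · linarith [countExcess_le_countExcess_add_one h hc hl']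

theorem interlaces_of_countExcess_mem_Icc {k : ℕ} {α : Fin (k + 1) → ℝ} {β : Fin k → ℝ}
    (hα : Monotone α) (hβ : Monotone β)
    (h : ∀ c ∉ Set.range α ∪ Set.range β, countExcess α β c ∈ Set.Icc 0 1) (i : Fin k) :
    α i.castSucc ≤ β i ∧ β i ≤ α i.succ := by
  have exists_avoiding : ∀ {a b : ℝ}, a < b → ∃ c ∈ Set.Ioo a b, c ∉ Set.range α ∪ Set.range β :=
    fun hab => (Set.Ioo_infinite hab).exists_notMem_finite
      ((Set.finite_range α).union (Set.finite_range β))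
  constructor <;> by_contra! hlt <;> obtain ⟨c, ⟨hc₁, hc₂⟩, hc⟩ := exists_avoiding hlt
  · have hα_count := (Tuple.lt_card_le_iff_apply_le_of_monotone hα).not.2 hc₂.not_ge
    have hβ_count := (Tuple.lt_card_le_iff_apply_le_of_monotone hβ).2 hc₁.le
    have hnonneg := (h c hc).1
    rw [countExcess] at hnonneg
    simp only [Fin.val_castSucc] at hα_count
    omega
  · have hα_count := (Tuple.lt_card_le_iff_apply_le_of_monotone hα).2 hc₁.le
    have hβ_count := (Tuple.lt_card_le_iff_apply_le_of_monotone hβ).not.2 hc₂.not_ge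
    have hle_one := (h c hc).2
    rw [countExcess] at hle_one
    simp only [Fin.val_succ] at hα_count
    omega

theorem aeval_eq_leadingCoeff_mul_prod {f : ℝ[X]} {γ : ι → ℝ}
    (hdeg : f.natDegree ≤ Fintype.card ι)
    (hroots : f.roots = Multiset.map γ Finset.univ.val) (t : ℂ) :
    aeval t f = f.leadingCoeff * ∏ i, (t - γ i) := by
  have hcard : f.roots.card = Fintype.card ι := by simp [hroots]
  have hsplit := C_leadingCoeff_mul_prod_multiset_X_sub_C
    (le_antisymm f.card_roots' (hcard ▸ hdeg))
  rw [hroots, Multiset.map_map] at hsplit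
  change C f.leadingCoeff * ∏ i, (X - C (γ i)) = f at hsplit
  conv_lhs => rw [← hsplit]
  simp

theorem interlaces_of_im_aeval_div_ne_zero {k : ℕ} {f g : ℝ[X]} {α : Fin (k + 1) → ℝ}
    {β : Fin k → ℝ} (hα : Monotone α) (hβ : Monotone β)
    (hf : f.natDegree ≤ k + 1) (hg : g.natDegree ≤ k)
    (hαroots : f.roots = Multiset.map α Finset.univ.val)
    (hβroots : g.roots = Multiset.map β Finset.univ.val)
    (h : ∀ t : ℂ, 0 < t.im → (aeval t f / aeval t g).im ≠ 0) (i : Fin k) :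
    α i.castSucc ≤ β i ∧ β i ≤ α i.succ := by
  refine interlaces_of_countExcess_mem_Icc hα hβ
    (fun c => countExcess_mem_Icc (by simp) fun t ht => ?_) i
  have him := h t ht
  rw [aeval_eq_leadingCoeff_mul_prod (by simpa) hαroots,
    aeval_eq_leadingCoeff_mul_prod (by simpa) hβroots, mul_div_mul_comm, ← ofReal_div,
    im_ofReal_mul] at him
  exact right_ne_zero_of_mul him

end Interlacing

section SigmaPolynomials

variable {n : ℕ} (r : Fin n → ℝ)

theorem natDegree_sigmaTP_le (m : ℕ) : (sigmaTP n r m).natDegree ≤ m := by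
  refine natDegree_sum_le_of_forall_le _ _ fun s hs => ?_
  rw [natDegree_prod_of_monic _ _ fun i _ => monic_X_add_C (r i)]
  simp [(Finset.mem_powersetCard.1 hs).2]

theorem natDegree_qPoly_le (i : Fin n) (k : ℕ) : (qPoly n r i k).natDegree ≤ k - 1 := by
  refine natDegree_sum_le_of_forall_le _ _ fun j hj => (natDegree_smul_le _ _).trans ?_
  calc (sigmaTP n r (k - 1 - j) * (X + C (r i)) ^ j).natDegree
      ≤ (k - 1 - j) + j := natDegree_mul_le_of_le (natDegree_sigmaTP_le r _) (by simp)
    _ = k - 1 := by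
      have := Finset.mem_range.1 hj
      omega

theorem natDegree_pPoly_le (k : ℕ) (r₀₀ : ℝ) (x : Fin n → ℝ) :
    (pPoly n k r₀₀ r x).natDegree ≤ k + 1 := by
  refine (natDegree_sub_le _ _).trans
    (max_le ?_ (natDegree_sum_le_of_forall_le _ _ fun i _ => ?_))
  · calc ((X + C r₀₀) * sigmaTP n r k).natDegree
        ≤ 1 + k := natDegree_mul_le_of_le (natDegree_X_add_C r₀₀).le (natDegree_sigmaTP_le r k)
      _ = k + 1 := add_comm 1 k
  · exact (natDegree_smul_le _ _).trans ((natDegree_qPoly_le r i k).trans (by omega))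

theorem aeval_sigmaTP {A : Type*} [CommRing A] [Algebra ℝ A] (m : ℕ) (t : A) :
    aeval t (sigmaTP n r m) = (Finset.univ.val.map fun i => t + algebraMap ℝ A (r i)).esymm m := by
  rw [Finset.esymm_map_val]
  simp [sigmaTP]

theorem aeval_qPoly_succ {A : Type*} [CommRing A] [Algebra ℝ A] (i : Fin n) (m : ℕ) (t : A) :
    aeval t (qPoly n r i (m + 1)) =
      ((Finset.univ.erase i).val.map fun i => t + algebraMap ℝ A (r i)).esymm m := by
  rw [← sum_range_neg_one_pow_mul_esymm_cons (t + algebraMap ℝ A (r i)),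
    ← map_val_eq_cons_map_erase (Finset.mem_univ i) fun i => t + algebraMap ℝ A (r i)]
  simp only [qPoly, map_sum, map_mul, map_pow, map_add, aeval_X, aeval_C, aeval_sigmaTP,
    Nat.add_sub_cancel, Algebra.smul_def, map_neg, map_one]

theorem im_aeval_qPoly_div_sigmaTP_nonpos {k : ℕ} (hkn : k ≤ n) (i : Fin n) {t : ℂ}
    (ht : 0 < t.im) : (aeval t (qPoly n r i k) / aeval t (sigmaTP n r k)).im ≤ 0 := by
  cases k with
  | zero => simp [qPoly]
  | succ m =>
    rw [aeval_qPoly_succ, aeval_sigmaTP, map_val_eq_cons_map_erase (Finset.mem_univ i), ← inv_div]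
    have hcard : m ≤ ((Finset.univ.erase i).val.map fun i => t + algebraMap ℝ ℂ (r i)).card := by
      simpa using Nat.le_sub_one_of_lt hkn
    have hle := im_le_im_esymm_cons_div_esymm (a := t + algebraMap ℝ ℂ (r i)) (by simp [ht]) hcard
    exact (im_inv_neg_of_im_pos (lt_of_lt_of_le (by simpa using ht) hle)).le

theorem im_aeval_pPoly_div_sigmaTP_pos {k : ℕ} (hkn : k ≤ n) (r₀₀ : ℝ) (x : Fin n → ℝ) {t : ℂ}
    (ht : 0 < t.im) : 0 < (aeval t (pPoly n k r₀₀ r x) / aeval t (sigmaTP n r k)).im := by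
  have hσ : aeval t (sigmaTP n r k) ≠ 0 := by
    rw [aeval_sigmaTP]
    exact esymm_ne_zero_of_forall_im_pos (by simp [ht]) (by simpa)
  have hquot : aeval t (pPoly n k r₀₀ r x) / aeval t (sigmaTP n r k) =
      t + r₀₀ - ∑ i, (x i ^ 2 : ℝ) * (aeval t (qPoly n r i k) / aeval t (sigmaTP n r k)) := by
    simp only [pPoly, map_sub, map_mul, map_add, map_sum, map_smul, aeval_X, aeval_C, sub_div,
      mul_div_cancel_right₀ _ hσ, Finset.sum_div, real_smul, mul_div_assoc, coe_algebraMap]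
  have hsum : ∑ i, x i ^ 2 * (aeval t (qPoly n r i k) / aeval t (sigmaTP n r k)).im ≤ 0 :=
    Finset.sum_nonpos fun i _ => mul_nonpos_of_nonneg_of_nonpos (sq_nonneg _)
      (im_aeval_qPoly_div_sigmaTP_nonpos r hkn i ht)
  rw [hquot, sub_im, im_sum]
  simp only [add_im, ofReal_im, im_ofReal_mul]
  linarith

end SigmaPolynomials

/-- the roots of `σ_k(r+tI)` separate (interlace) the roots of `p_{k+1}`:
`α₁ ≤ β₁ ≤ α₂ ≤ β₂ ≤ … ≤ β_k ≤ α_{k+1}`. -/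
theorem sigma_interlaces_pPoly (n k : ℕ) (hn : 1 ≤ n) (hk1 : 1 ≤ k) (hkn : k ≤ n)
    (r₀₀ : ℝ) (r x : Fin n → ℝ)
    (α : Fin (k + 1) → ℝ) (β : Fin k → ℝ)
    (hα : Monotone α) (hβ : Monotone β)
    (hαroots : (pPoly n k r₀₀ r x).roots = Multiset.map α Finset.univ.val)
    (hβroots : (sigmaTP n r k).roots = Multiset.map β Finset.univ.val) :
    ∀ i : Fin k, α i.castSucc ≤ β i ∧ β i ≤ α i.succ := by
  refine interlaces_of_im_aeval_div_ne_zero hα hβ (natDegree_pPoly_le r k r₀₀ x)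
    (natDegree_sigmaTP_le r k) hαroots hβroots fun t ht => ?_
  exact (im_aeval_pPoly_div_sigmaTP_pos r hkn r₀₀ x ht).ne'
end
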